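/- Let Υ : ℓ^n → ℓ^n be an operator such that the map a ↦ Υ a − a is strictly causal. Then Υ is a bijection of ℓ^n and its inverse Υ^{-1} is causal; for every a ∈ ℓ^n, the sequence b = Υ^{-1} a is the unique sequence satisfying b_t = a_t − (Υ b − b)_t for all t ∈ ℕ. -/

import Mathlib

/-- Sequences with values in `ℝ^n` (with the Euclidean norm). -/
abbrev Traj (n : ℕ) : Type := ℕ → EuclideanSpace ℝ (Fin n)

/-- A causal operator on sequences. -/
def Causal {n m : ℕ} (A : Traj n → Traj m) : Prop :=
  ∀ (x x' : Traj n) (t : ℕ), (∀ s, s ≤ t → x s = x' s) → A x t = A x' t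

/-- A strictly causal operator on sequences. -/
def StrictlyCausal {n m : ℕ} (A : Traj n → Traj m) : Prop :=
  ∀ (x x' : Traj n) (t : ℕ), (∀ s, s < t → x s = x' s) → A x t = A x' t

/-- Causal in the first argument, strictly causal in the second argument. -/
def CausalSC {n q m : ℕ} (B : Traj n → Traj q → Traj m) : Prop :=
  ∀ (x x' : Traj n) (z z' : Traj q) (t : ℕ),
    (∀ s, s ≤ t → x s = x' s) → (∀ s, s < t → z s = z' s) → B x z t = B x' z' t

/-- Causal in both arguments. -/
def CausalCC {n q m : ℕ} (B : Traj n → Traj q → Traj m) : Prop :=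
  ∀ (x x' : Traj n) (z z' : Traj q) (t : ℕ),
    (∀ s, s ≤ t → x s = x' s) → (∀ s, s ≤ t → z s = z' s) → B x z t = B x' z' t

/-- Strictly causal in both arguments. -/
def CausalSS {n q m : ℕ} (B : Traj n → Traj q → Traj m) : Prop :=
  ∀ (x x' : Traj n) (z z' : Traj q) (t : ℕ),
    (∀ s, s < t → x s = x' s) → (∀ s, s < t → z s = z' s) → B x z t = B x' z' t

/-- Membership in `ℓ_p`: summability of `‖x t‖ ^ p`. -/
def InLp (p : ℝ) {E : Type*} [Norm E] (x : ℕ → E) : Prop :=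
  Summable fun t => ‖x t‖ ^ p

/-- The `ℓ_p` norm `(∑ₜ ‖x t‖ ^ p) ^ (1/p)` of a sequence. -/
noncomputable def lpSeqNorm (p : ℝ) {E : Type*} [Norm E] (x : ℕ → E) : ℝ :=
  (∑' t, ‖x t‖ ^ p) ^ (1 / p)

/-- The `ℝ^{r+m}`-valued sequence obtained by stacking `v` and `d`
(the norm of `(v t, d t)` is the Euclidean norm of the concatenated vector). -/
noncomputable def pairSeq {r m : ℕ} (v : Traj r) (d : Traj m) :
    ℕ → WithLp 2 (EuclideanSpace ℝ (Fin r) × EuclideanSpace ℝ (Fin m)) :=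
  fun t => (WithLp.equiv 2 _).symm (v t, d t)

/-- An exponentially decaying sequence: `‖x t‖ ≤ k · α ^ t` with `k > 0`, `α ∈ (0,1)`. -/
def ExpDecay {E : Type*} [Norm E] (x : ℕ → E) : Prop :=
  ∃ k : ℝ, 0 < k ∧ ∃ α : ℝ, 0 < α ∧ α < 1 ∧ ∀ t, ‖x t‖ ≤ k * α ^ t

/-! The equation `Υ b = a` says that `b` is a fixed point of the strictly causal map
`b ↦ a - (Υ b - b)`. Such a map computes each entry of its value from the earlier entries of its
argument, so well-founded recursion produces a fixed point. By well-founded induction, two sequences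
that satisfy the fixed point equation up to time `t` agree up to time `t`; this gives uniqueness,
and, since the map involves `a` only pointwise, also causality of `a ↦ b`. -/

section WellFoundedTime

open Function Set

theorem isFixedPt_sub_sub_self_iff {G : Type*} [AddCommGroup G] {f : G → G} {a b : G} :
    IsFixedPt (fun x => a - (f x - x)) b ↔ f b = a := by
  rw [IsFixedPt, sub_eq_iff_eq_add, add_sub_cancel, eq_comm]

variable {ι : Type*} [Preorder ι] {E F : ι → Type*}

/-- Causality of an operator between families indexed by an arbitrary preorder of times: the value
at time `t` is determined by the argument up to and including `t`. -/
def IsCausal (A : (∀ i, E i) → ∀ i, F i) : Prop :=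
  ∀ t, DependsOn (fun x => A x t) (Iic t)

/-- Strict causality of an operator between families indexed by an arbitrary preorder of times: the
value at time `t` is determined by the argument strictly before `t`. -/
def IsStrictlyCausal (A : (∀ i, E i) → ∀ i, F i) : Prop :=
  ∀ t, DependsOn (fun x => A x t) (Iio t)

namespace IsStrictlyCausal

theorem const_sub [∀ i, Sub (F i)] {A : (∀ i, E i) → ∀ i, F i} (hA : IsStrictlyCausal A)
    (a : ∀ i, F i) : IsStrictlyCausal fun x => a - A x :=
  fun t _ _ hxy => congrArg (a t - ·) (hA t hxy)

variable [WellFoundedLT ι]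

theorem eq_of_apply_eq_on_isLowerSet {A : (∀ i, E i) → ∀ i, E i} (hA : IsStrictlyCausal A)
    {S : Set ι} (hS : IsLowerSet S) {x y : ∀ i, E i} (hx : ∀ t ∈ S, A x t = x t)
    (hy : ∀ t ∈ S, A y t = y t) : ∀ t ∈ S, x t = y t := by
  intro t
  induction t using WellFoundedLT.induction with
  | ind t ih =>
    intro ht
    calc x t = A x t := (hx t ht).symm
      _ = A y t := hA t fun s hs => ih s hs (hS (le_of_lt hs) ht)
      _ = y t := hy t ht

theorem exists_isFixedPt [∀ i, Nonempty (E i)] {A : (∀ i, E i) → ∀ i, E i}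
    (hA : IsStrictlyCausal A) : ∃ x, IsFixedPt A x := by
  classical
  let z : ∀ i, E i := Classical.arbitrary _
  obtain ⟨x, hx⟩ : ∃ x : ∀ i, E i, ∀ t, x t = A ((Iio t).piecewise x z) t :=
    ⟨wellFounded_lt.fix fun t b => A (fun s => if hs : s < t then b s hs else z s) t,
      wellFounded_lt.fix_eq _⟩
  refine ⟨x, funext fun t => ?_⟩
  rw [hx t]
  exact hA t fun s hs => (piecewise_eq_of_mem _ _ _ hs).symm

theorem existsUnique_isFixedPt [∀ i, Nonempty (E i)] {A : (∀ i, E i) → ∀ i, E i}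
    (hA : IsStrictlyCausal A) : ∃! x, IsFixedPt A x :=
  existsUnique_of_exists_of_unique hA.exists_isFixedPt fun _ _ hx hy =>
    funext fun t => hA.eq_of_apply_eq_on_isLowerSet isLowerSet_univ (fun s _ => congrFun hx s)
      (fun s _ => congrFun hy s) t (mem_univ t)

end IsStrictlyCausal

variable [WellFoundedLT ι] [∀ i, AddCommGroup (E i)] {Υ Ξ : (∀ i, E i) → ∀ i, E i}

theorem bijective_of_isStrictlyCausal_sub_self (h : IsStrictlyCausal fun a => Υ a - a) :
    Bijective Υ :=
  (bijective_iff_existsUnique Υ).mpr fun a => by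
    simpa only [isFixedPt_sub_sub_self_iff] using (h.const_sub a).existsUnique_isFixedPt

theorem isCausal_of_rightInverse (h : IsStrictlyCausal fun a => Υ a - a)
    (hΞ : RightInverse Ξ Υ) : IsCausal Ξ := by
  intro t a a' haa'
  have hfix (c : ∀ i, E i) (s : ι) : c s - (Υ (Ξ c) - Ξ c) s = Ξ c s :=
    congrFun (isFixedPt_sub_sub_self_iff.mpr (hΞ c)) s
  have hfix' (s : ι) (hs : s ∈ Iic t) : a s - (Υ (Ξ a') - Ξ a') s = Ξ a' s := by
    rw [haa' s hs, hfix]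
  exact (h.const_sub a).eq_of_apply_eq_on_isLowerSet (isLowerSet_Iic t) (fun s _ => hfix a s)
    hfix' t self_mem_Iic

theorem statement3_general (Υ : (∀ i, E i) → ∀ i, E i)
    (h : IsStrictlyCausal fun a => Υ a - a) :
    Bijective Υ ∧
    (∀ Ξ : (∀ i, E i) → ∀ i, E i, RightInverse Ξ Υ → IsCausal Ξ) ∧
    (∀ a : ∀ i, E i, ∃! b : ∀ i, E i, ∀ t, b t = a t - (Υ b - b) t) ∧
    (∀ a b : ∀ i, E i, Υ b = a → ∀ t, b t = a t - (Υ b - b) t) := by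
  have hsolves (a b : ∀ i, E i) : (∀ t, b t = a t - (Υ b - b) t) ↔ Υ b = a := by
    rw [← isFixedPt_sub_sub_self_iff, IsFixedPt, eq_comm, funext_iff]
    rfl
  have hbij : Bijective Υ := bijective_of_isStrictlyCausal_sub_self h
  refine ⟨hbij, fun _ => isCausal_of_rightInverse h, fun a => ?_, fun a b => (hsolves a b).mpr⟩
  simpa only [hsolves] using hbij.existsUnique a

end WellFoundedTime

theorem causal_iff_isCausal {n m : ℕ} {A : Traj n → Traj m} : Causal A ↔ IsCausal A :=
  ⟨fun h t _ _ => h _ _ t, fun h _ _ t hx => h t hx⟩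

theorem strictlyCausal_iff_isStrictlyCausal {n m : ℕ} {A : Traj n → Traj m} :
    StrictlyCausal A ↔ IsStrictlyCausal A :=
  ⟨fun h t _ _ => h _ _ t, fun h _ _ t hx => h t hx⟩

/-- if `a ↦ Υ a − a` is strictly causal then `Υ` is a bijection with causal
inverse, and `b = Υ⁻¹ a` is the unique sequence with `b t = a t − (Υ b − b) t` for all `t`. -/
theorem statement3 {n : ℕ} (Υ : Traj n → Traj n)
    (h : StrictlyCausal (fun a => Υ a - a)) :
    Function.Bijective Υ ∧
    (∀ Ξ : Traj n → Traj n, (∀ a, Ξ (Υ a) = a) → (∀ a, Υ (Ξ a) = a) → Causal Ξ) ∧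
    (∀ a : Traj n, ∃! b : Traj n, ∀ t : ℕ, b t = a t - (Υ b - b) t) ∧
    (∀ a b : Traj n, Υ b = a → ∀ t : ℕ, b t = a t - (Υ b - b) t) := by
  obtain ⟨hbij, hcausal, hsolves⟩ :=
    statement3_general Υ (strictlyCausal_iff_isStrictlyCausal.mp h)
  exact ⟨hbij, fun Ξ _ hΞ => causal_iff_isCausal.mpr (hcausal Ξ hΞ), hsolves⟩
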